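/- Welfare of the restricted-best-response fixed point: let ε ∈ [0,1], let x* be an optimal pure profile that is a disjoint union of jolly stars, let D* be the set of agents voting themselves in x*, and for j ∈ D* let L_j be the agents delegating to j in x*. Let x be any mixed profile such that for every i ∈ D*, x_{ii} ≥ ε, and for every j ∉ D*, u_j(x_j, x_{−j}) ≥ u_j(x̂_j, x_{−j}) for all x̂_j with Σ_k x̂_{jk} = 1. Then SW(x) ≥ ε · OPT. -/

import Mathlib

/-!
The bound holds agent by agent: `util u x i ≥ ε * pureUtil u s i` for every `i`.

A self-voter `i` of the optimal profile votes herself under `x` with probability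
`x i i ≥ ε`, and is her own guru whenever she does. An agent `i` who delegates to a star
centre `k` could deviate to delegating to `k` with probability one; then `k` is her guru
whenever `k` votes, which happens with probability `x k k ≥ ε` because `k ≠ i` is unaffected by
the deviation. Since `i` best-responds, she gets at least `ε * u i k`. Both cases are instances of
`util_ge`, which rests on the marginal computation `sum_prob_self`.
-/

open Finset

/-- The guru of agent `i` under pure profile `s` (where `s i = some j` means `i`
delegates to `j`, with `s i = some i` meaning `i` votes herself, and `s i = none`
meaning `i` abstains): follow delegation arcs for `n` steps; the endpoint is the
guru provided it votes itself. -/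
def guru {n : ℕ} (s : Fin n → Option (Fin n)) (i : Fin n) : Option (Fin n) :=
  ((fun o => Option.bind o s)^[n] (some i)).bind
    (fun j => if s j = some j then some j else none)

/-- Utility of agent `i` in the pure profile `s`: `u i (g i)` if the guru exists, else `0`. -/
def pureUtil {n : ℕ} (u : Fin n → Fin n → ℝ) (s : Fin n → Option (Fin n)) (i : Fin n) : ℝ :=
  (guru s i).elim 0 (u i)

/-- A mixed strategy for a single agent: nonnegative, total probability at most one
(the residual probability is abstention). -/
def IsStrat {n : ℕ} (y : Fin n → ℝ) : Prop := (∀ j, 0 ≤ y j) ∧ (∑ j, y j) ≤ 1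

/-- A mixed strategy profile. -/
def IsMixed {n : ℕ} (x : Fin n → Fin n → ℝ) : Prop := ∀ i, IsStrat (x i)

/-- Probability that the independent randomization `x` produces the pure profile `s`. -/
def prob {n : ℕ} (x : Fin n → Fin n → ℝ) (s : Fin n → Option (Fin n)) : ℝ :=
  ∏ i, (s i).elim (1 - ∑ j, x i j) (x i)

/-- Expected utility of agent `i` under the mixed profile `x`. -/
def util {n : ℕ} (u x : Fin n → Fin n → ℝ) (i : Fin n) : ℝ :=
  ∑ s : Fin n → Option (Fin n), prob x s * pureUtil u s i

/-- Expected social welfare of the mixed profile `x`. -/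
def SW {n : ℕ} (u x : Fin n → Fin n → ℝ) : ℝ := ∑ i, util u x i

/-- The set of social-welfare values achievable by mixed profiles; `OPT` is its greatest element. -/
def SWvals {n : ℕ} (u : Fin n → Fin n → ℝ) : Set ℝ :=
  {w | ∃ x, IsMixed x ∧ w = SW u x}

/-- `x` is an `ε`-Nash equilibrium. -/
def EpsNash {n : ℕ} (u : Fin n → Fin n → ℝ) (ε : ℝ) (x : Fin n → Fin n → ℝ) : Prop :=
  ∀ i y, IsStrat y → util u x i ≥ (1 - ε) * util u (Function.update x i y) i

/-- `x` is an (exact, mixed) Nash equilibrium. -/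
def NashEq {n : ℕ} (u x : Fin n → Fin n → ℝ) : Prop :=
  ∀ i y, IsStrat y → util u x i ≥ util u (Function.update x i y) i

theorem guru_of_direct {n : ℕ} {s : Fin n → Option (Fin n)} {i k : Fin n}
    (hi : s i = some k) (hk : s k = some k) : guru s i = some k := by
  obtain ⟨m, rfl⟩ : ∃ m, n = m + 1 := ⟨n - 1, by have := i.pos; omega⟩
  have hfix : (fun o => Option.bind o s)^[m] (some k) = some k :=
    Function.iterate_fixed (by simpa using hk) m
  unfold guru
  rw [Function.iterate_succ_apply]
  simp [hi, hfix, hk]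

theorem pureUtil_of_direct {n : ℕ} (u : Fin n → Fin n → ℝ) {s : Fin n → Option (Fin n)}
    {i k : Fin n} (hi : s i = some k) (hk : s k = some k) : pureUtil u s i = u i k := by
  simp [pureUtil, guru_of_direct hi hk]

theorem pureUtil_nonneg {n : ℕ} {u : Fin n → Fin n → ℝ} (hu : ∀ i j, 0 ≤ u i j)
    (s : Fin n → Option (Fin n)) (i : Fin n) : 0 ≤ pureUtil u s i := by
  unfold pureUtil
  cases guru s i with
  | none => simp
  | some k => exact hu i k

theorem prob_nonneg {n : ℕ} {x : Fin n → Fin n → ℝ} (hx : IsMixed x)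
    (s : Fin n → Option (Fin n)) : 0 ≤ prob x s := by
  refine Finset.prod_nonneg fun i _ => ?_
  cases s i with
  | none => simpa using (hx i).2
  | some k => exact (hx i).1 k

/-- The marginal probability that agent `k` votes herself is `x k k`. -/
theorem sum_prob_self {n : ℕ} (x : Fin n → Fin n → ℝ) (k : Fin n) :
    ∑ s : Fin n → Option (Fin n), (if s k = some k then prob x s else 0) = x k k := by
  -- The indicator only restricts the `k`-th factor, so the sum over profiles is again a product.
  let w : Fin n → Option (Fin n) → ℝ := fun i o =>
    if i = k ∧ o ≠ some k then 0 else o.elim (1 - ∑ j, x i j) (x i)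
  have hw : ∀ s : Fin n → Option (Fin n),
      (if s k = some k then prob x s else 0) = ∏ i, w i (s i) := by
    intro s
    split_ifs with h
    · refine Finset.prod_congr rfl fun i _ => ?_
      have : ¬ (i = k ∧ s i ≠ some k) := by
        rintro ⟨rfl, h'⟩
        exact h' h
      simp only [w, if_neg this]
    · exact (Finset.prod_eq_zero (Finset.mem_univ k) (by simp [w, h])).symm
  have hfac : ∀ i, ∑ o, w i o = if i = k then x k k else 1 := by
    intro i
    by_cases h : i = k
    · subst h
      simp [w]
    · simp [w, Fintype.sum_option, h]
  simp_rw [hw]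
  rw [← Fintype.piFinset_univ, ← Finset.prod_univ_sum]
  simp [hfac]

/-- If `i` almost surely chooses `k` whenever `k` votes, then `i` gets at least `x k k * u i k`. -/
theorem util_ge {n : ℕ} {u x : Fin n → Fin n → ℝ} (hu : ∀ i j, 0 ≤ u i j) (hx : IsMixed x)
    (i k : Fin n)
    (h : ∀ s : Fin n → Option (Fin n), prob x s ≠ 0 → s k = some k → s i = some k) :
    x k k * u i k ≤ util u x i := by
  rw [← sum_prob_self x k, Finset.sum_mul]
  refine Finset.sum_le_sum fun s _ => ?_
  by_cases hk : s k = some k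
  · rw [if_pos hk]
    by_cases hp : prob x s = 0
    · simp [hp]
    · rw [pureUtil_of_direct u (h s hp hk) hk]
  · rw [if_neg hk, zero_mul]
    exact mul_nonneg (prob_nonneg hx s) (pureUtil_nonneg hu s i)

/-- Welfare of the restricted-best-response fixed point: if s is an optimal pure
profile that is a disjoint union of jolly stars, D* its set of self-voters, and
x a mixed profile in which every i ∈ D* self-votes with probability at least ε
and every j ∉ D* plays a best response among unit-sum strategies, then
SW(x) ≥ ε · OPT. -/
theorem stmt8 {n : ℕ} (ε : ℝ) (hε : ε ∈ Set.Icc (0:ℝ) 1)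
    (u : Fin n → Fin n → ℝ) (hu : ∀ i j, 0 ≤ u i j ∧ u i j ≤ 1)
    (s : Fin n → Option (Fin n))
    (hsopt : IsGreatest (SWvals u) (∑ i, pureUtil u s i))
    (hstar : ∀ i, s i = some i ∨ ∃ j, j ≠ i ∧ s i = some j ∧ s j = some j ∧ 0 < u i j)
    (x : Fin n → Fin n → ℝ) (hx : IsMixed x)
    (hx1 : ∀ i, s i = some i → ε ≤ x i i)
    (hx2 : ∀ j, s j ≠ some j →
      ∀ y : Fin n → ℝ, (∀ k, 0 ≤ y k) → (∑ k, y k) = 1 →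
        util u x j ≥ util u (Function.update x j y) j) :
    SW u x ≥ ε * (∑ i, pureUtil u s i) := by
  have hu0 : ∀ i j, 0 ≤ u i j := fun i j => (hu i j).1
  unfold SW
  rw [ge_iff_le, Finset.mul_sum]
  refine Finset.sum_le_sum fun i _ => ?_
  rcases hstar i with hi | ⟨k, hki, hik, hkk, -⟩
  · rw [pureUtil_of_direct u hi hi]
    exact (mul_le_mul_of_nonneg_right (hx1 i hi) (hu0 i i)).trans
      (util_ge hu0 hx i i fun _ _ h => h)
  · rw [pureUtil_of_direct u hik hkk]
    have hne : s i ≠ some i := by simpa [hik] using hki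
    -- The deviation of `i`: delegate to the star centre `k` with probability one.
    let y : Fin n → ℝ := fun j => if j = k then 1 else 0
    have hy0 : ∀ j, 0 ≤ y j := fun j => by
      simp only [y]
      split_ifs <;> norm_num
    have hy1 : ∑ j, y j = 1 := by simp [y]
    have hx' : IsMixed (Function.update x i y) := by
      intro j
      by_cases hj : j = i
      · subst hj
        rw [Function.update_self]
        exact ⟨hy0, hy1.le⟩
      · simpa [hj] using hx j
    have hdev := util_ge hu0 hx' i k (by
      intro t ht _
      have hti := Finset.prod_ne_zero_iff.mp ht i (Finset.mem_univ i)
      cases hto : t i with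
      | none => simp [hto, hy1] at hti
      | some j =>
        have : j = k := by simpa [hto, y] using hti
        rw [this])
    rw [Function.update_of_ne hki] at hdev
    exact ((mul_le_mul_of_nonneg_right (hx1 k hkk) (hu0 i k)).trans hdev).trans
      (hx2 i hne y hy0 hy1)
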